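/- There exists a function G : ℂ×ℂ → ℂ that is holomorphic in each of its two variables separately on the domain (ℂ∖{1}) × (ℂ∖(−∞,0]), such that G(s,w) = ∑_{n=0}^∞ (n+w)^{−s} whenever Re(s) > 1 and w ∈ ℂ∖(−∞,0], and such that for each fixed w ∈ ℂ∖(−∞,0] one has (s−1)·G(s,w) → 1 as s → 1 with s ≠ 1 (i.e. the Hurwitz zeta function ζ(s,w) = G(s,w) has a simple pole at s = 1 with residue 1). -/

import Mathlib

open Complex Filter

/-- The real half-line `(−∞,0]` viewed inside `ℂ`. -/
def negRay : Set ℂ := {w : ℂ | ∃ x : ℝ, x ≤ 0 ∧ (x : ℂ) = w}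

/-! Auxiliary material for the Hurwitz zeta function. -/

open scoped Topology
open MeasureTheory Set

namespace HZ

lemma mem_slit_of {w : ℂ} (hw : w ∉ negRay) : w ∈ slitPlane := by
  rw [mem_slitPlane_iff]
  by_contra! h
  exact hw ⟨w.re, h.1, by apply Complex.ext <;> simp [h.2]⟩

lemma add_nat_mem {w : ℂ} (hw : w ∈ slitPlane) (n : ℕ) : (n : ℂ) + w ∈ slitPlane := by
  rw [mem_slitPlane_iff] at *
  rcases hw with h | h
  · left
    have : (0 : ℝ) ≤ n := n.cast_nonneg
    simp; linarith
  · right; simpa using h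

lemma seg_mem {w : ℂ} (hw : w ∈ slitPlane) {t : ℝ} (ht : t ∈ Icc (0 : ℝ) 1) :
    1 + (t : ℂ) * (w - 1) ∈ slitPlane := by
  have := starConvex_one_slitPlane hw (a := 1 - t) (b := t) (by linarith [ht.2]) ht.1 (by ring)
  convert this using 1
  simp; ring

lemma continuousOn_param {X : Type*} [TopologicalSpace X] {U : Set X}
    {F : X → ℝ → ℂ} (hF : ContinuousOn (fun p : X × ℝ => F p.1 p.2) (U ×ˢ Icc (0 : ℝ) 1)) :
    ContinuousOn (fun x => ∫ t in (0 : ℝ)..1, F x t) U := by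
  rw [continuousOn_iff_continuous_domRestrict]
  have h1 : Continuous (Function.uncurry fun (x : U) (t : ℝ) =>
      F x (projIcc (0 : ℝ) 1 zero_le_one t)) := by
    have h2 : Continuous fun p : U × ℝ => ((p.1 : X), (projIcc (0 : ℝ) 1 zero_le_one p.2 : ℝ)) := by
      fun_prop
    exact hF.comp_continuous h2 (fun p => ⟨p.1.2, (projIcc (0 : ℝ) 1 zero_le_one p.2).2⟩)
  have h3 := intervalIntegral.continuous_parametric_intervalIntegral_of_continuous'
    (μ := volume) h1 0 1
  convert h3 using 1
  ext x
  apply intervalIntegral.integral_congr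
  intro t ht
  rw [uIcc_of_le zero_le_one] at ht
  simp [projIcc_of_mem _ ht]

lemma differentiableOn_param {U : Set ℂ} (hU : IsOpen U)
    {F : ℂ → ℝ → ℂ} (hF : ContinuousOn (fun p : ℂ × ℝ => F p.1 p.2) (U ×ˢ Icc (0 : ℝ) 1))
    (hd : ∀ t ∈ Icc (0 : ℝ) 1, DifferentiableOn ℂ (fun z => F z t) U) :
    DifferentiableOn ℂ (fun x => ∫ t in (0 : ℝ)..1, F x t) U := by
  intro z₀ hz₀
  obtain ⟨R, hR, hRU⟩ := Metric.isOpen_iff.1 hU z₀ hz₀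
  set r := R / 3 with hr
  have hr0 : 0 < r := by positivity
  have hsub : Metric.closedBall z₀ (2 * r) ⊆ U :=
    (Metric.closedBall_subset_ball (by linarith)).trans hRU
  obtain ⟨C, hC⟩ := ((isCompact_closedBall z₀ (2 * r)).prod
    (isCompact_Icc (a := (0 : ℝ)) (b := 1))).exists_bound_of_continuousOn
    (hF.mono (prod_mono hsub le_rfl))
  have hI : Set.uIoc (0 : ℝ) 1 ⊆ Icc 0 1 := by
    rw [uIoc_of_le zero_le_one]; exact Ioc_subset_Icc_self
  have hcont : ∀ z ∈ U, ContinuousOn (F z) (Icc 0 1) := fun z hz =>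
    hF.comp (f := fun t : ℝ => (z, t)) (by fun_prop) (fun t ht => ⟨hz, ht⟩)
  have hmeas : ∀ z ∈ U, AEStronglyMeasurable (F z) (volume.restrict (Set.uIoc (0 : ℝ) 1)) :=
    fun z hz => ((hcont z hz).mono hI).aestronglyMeasurable measurableSet_uIoc
  have hda : ∀ t ∈ Icc (0 : ℝ) 1, ∀ z ∈ U, HasDerivAt (fun z => F z t) (deriv (fun z => F z t) z) z :=
    fun t ht z hz => ((hd t ht).differentiableAt (hU.mem_nhds hz)).hasDerivAt
  have hseq : ∀ n : ℕ, z₀ + (r : ℂ) * (1 / ((n : ℂ) + 1)) ∈ U := by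
    intro n
    apply hsub
    rw [Metric.mem_closedBall, dist_eq_norm, add_sub_cancel_left, norm_mul, Complex.norm_real,
      Real.norm_of_nonneg hr0.le]
    have : ‖(1 / ((n : ℂ) + 1))‖ ≤ 1 := by
      rw [norm_div, norm_one, ← Nat.cast_succ, Complex.norm_natCast]
      exact div_le_one_of_le₀ (by simp) (by positivity)
    nlinarith
  have hlim : Tendsto (fun n : ℕ => z₀ + (r : ℂ) * (1 / ((n : ℂ) + 1))) atTop (𝓝[≠] z₀) := by
    rw [tendsto_nhdsWithin_iff]
    constructor
    · have := (tendsto_one_div_add_atTop_nhds_zero_nat (𝕜 := ℂ)).const_mul (r : ℂ) |>.const_add z₀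
      simpa using this
    · refine Eventually.of_forall fun n => ?_
      have h1 : ((n : ℂ) + 1) ≠ 0 := Nat.cast_add_one_ne_zero n
      have h2 : (r : ℂ) ≠ 0 := by exact_mod_cast hr0.ne'
      simp [h1, h2]
  have key := intervalIntegral.hasDerivAt_integral_of_dominated_loc_of_deriv_le (μ := volume)
    (F := F) (F' := fun z t => deriv (fun z => F z t) z) (x₀ := z₀) (a := 0) (b := 1)
    (bound := fun _ => C / r) (Metric.ball_mem_nhds z₀ hr0)
    (by filter_upwards [hU.mem_nhds hz₀] with z hz using hmeas z hz)
    (ContinuousOn.intervalIntegrable (by rw [uIcc_of_le zero_le_one]; exact hcont z₀ hz₀))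
    (by
      refine aestronglyMeasurable_of_tendsto_ae atTop
        (f := fun (n : ℕ) t => slope (fun z => F z t) z₀ (z₀ + (r : ℂ) * (1 / ((n : ℂ) + 1)))) ?_ ?_
      · intro n
        simp only [slope_def_field, div_eq_mul_inv (_ - _)]
        have := ((hmeas _ (hseq n)).sub (hmeas _ hz₀)).mul_const
          ((z₀ + (r : ℂ) * (1 / ((n : ℂ) + 1)) - z₀)⁻¹)
        exact this
      · rw [ae_restrict_iff' measurableSet_uIoc]
        refine Eventually.of_forall fun t ht => ?_
        exact (hasDerivAt_iff_tendsto_slope.1 (hda t (hI ht) z₀ hz₀)).comp hlim)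
    (by
      refine Eventually.of_forall fun t ht z hz => ?_
      have hcb : Metric.closedBall z r ⊆ Metric.closedBall z₀ (2 * r) :=
        Metric.closedBall_subset_closedBall' (by linarith [Metric.mem_ball.1 hz])
      refine Complex.norm_deriv_le_of_forall_mem_sphere_norm_le hr0 ?_ ?_
      · apply DifferentiableOn.diffContOnCl_ball (hd t (hI ht))
        exact hcb.trans hsub
      · intro y hy
        exact hC (y, t) ⟨hcb (Metric.sphere_subset_closedBall hy), hI ht⟩)
    intervalIntegrable_const
    (by
      refine Eventually.of_forall fun t ht z hz => hda t (hI ht) z (hsub ?_)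
      exact Metric.ball_subset_closedBall.trans
        (Metric.closedBall_subset_closedBall (by linarith)) hz)
  exact key.2.differentiableAt.differentiableWithinAt

/-- The Dirichlet-type series. -/
noncomputable def S (s w : ℂ) : ℂ := ∑' n : ℕ, ((n : ℂ) + w) ^ (-s)

lemma lower {w₀ : ℂ} (hw : w₀ ∈ slitPlane) : ∃ c : ℝ, 0 < c ∧ c ≤ 1 ∧ ∃ B : Set ℂ, IsOpen B ∧
    w₀ ∈ B ∧ B ⊆ slitPlane ∧ ∀ w ∈ B, ∀ n : ℕ, c * ((n : ℝ) + 1) ≤ ‖(n : ℂ) + w‖ := by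
  obtain ⟨R, hR, hRU⟩ := Metric.isOpen_iff.1 isOpen_slitPlane w₀ hw
  set δ := R / 2 with hδ
  have hδ0 : 0 < δ := by positivity
  set M := ‖1 - w₀‖ + δ
  have hM : 0 < M := by positivity
  refine ⟨δ / (δ + M), by positivity, div_le_one_of_le₀ (by linarith) (by positivity),
    Metric.ball w₀ δ, Metric.isOpen_ball, Metric.mem_ball_self hδ0,
    (Metric.ball_subset_ball (by linarith)).trans hRU, ?_⟩
  intro w hw n
  have hwd : ‖w - w₀‖ < δ := by rwa [Metric.mem_ball, dist_eq_norm] at hw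
  have h1 : δ ≤ ‖(n : ℂ) + w‖ := by
    by_contra! h
    have : -(n : ℂ) ∈ Metric.ball w₀ R := by
      rw [Metric.mem_ball, dist_eq_norm]
      calc ‖-(n : ℂ) - w₀‖ = ‖(w - w₀) - (n + w)‖ := by congr 1; ring
        _ ≤ ‖w - w₀‖ + ‖(n : ℂ) + w‖ := norm_sub_le _ _
        _ < R := by linarith
    have := hRU this
    rw [mem_slitPlane_iff] at this
    simp at this
    linarith [(n.cast_nonneg : (0 : ℝ) ≤ n)]
  have h2 : (n : ℝ) + 1 ≤ ‖(n : ℂ) + w‖ + M := by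
    calc (n : ℝ) + 1 = ‖(n : ℂ) + 1‖ := by exact_mod_cast (Complex.norm_natCast (n + 1)).symm
      _ = ‖((n : ℂ) + w) + ((1 - w₀) - (w - w₀))‖ := by congr 1; ring
      _ ≤ ‖(n : ℂ) + w‖ + (‖1 - w₀‖ + ‖w - w₀‖) :=
        (norm_add_le _ _).trans (by gcongr; exact norm_sub_le _ _)
      _ ≤ _ := by simp only [M]; linarith
  rw [div_mul_eq_mul_div, div_le_iff₀ (by positivity)]
  nlinarith

lemma local_bound {s₀ w₀ : ℂ} (hs : 1 < s₀.re) (hw : w₀ ∈ slitPlane) :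
    ∃ A B : Set ℂ, ∃ u : ℕ → ℝ, IsOpen A ∧ IsOpen B ∧ s₀ ∈ A ∧ w₀ ∈ B ∧ B ⊆ slitPlane ∧
      Summable u ∧ ∀ n : ℕ, ∀ s ∈ A, ∀ w ∈ B, ‖((n : ℂ) + w) ^ (-s)‖ ≤ u n := by
  obtain ⟨c, hc, hc1, B, hB, hwB, hBs, hle⟩ := lower hw
  set σ := (1 + s₀.re) / 2 with hσ
  set M := ‖s₀‖ + 1 with hM
  refine ⟨{s | σ < s.re} ∩ {s | ‖s‖ < M}, B,
    fun n => c ^ (-M) * Real.exp (Real.pi * M) * ((n + 1 : ℕ) : ℝ) ^ (-σ),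
    (isOpen_lt continuous_const continuous_re).inter (isOpen_lt continuous_norm continuous_const),
    hB, ⟨?_, ?_⟩, hwB, hBs, ?_, ?_⟩
  · simp only [mem_ofPred_eq]; linarith
  · simp only [mem_ofPred_eq]; linarith
  · apply Summable.mul_left
    exact (summable_nat_add_iff 1).2 (Real.summable_nat_rpow.2 (by linarith))
  · rintro n s ⟨hs1, hs2⟩ w hwB
    simp only [mem_ofPred_eq] at hs1 hs2
    have h0 := hle w hwB n
    have hn : (1 : ℝ) ≤ (n : ℝ) + 1 := by linarith [(n.cast_nonneg : (0 : ℝ) ≤ n)]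
    have hre : s.re ≤ M := (re_le_norm s).trans hs2.le
    refine (norm_cpow_le _ _).trans ?_
    rw [div_eq_mul_inv, ← Real.exp_neg]
    have e1 : ‖(n : ℂ) + w‖ ^ (-s).re ≤ c ^ (-M) * ((n + 1 : ℕ) : ℝ) ^ (-σ) := by
      calc ‖(n : ℂ) + w‖ ^ (-s).re ≤ (c * ((n : ℝ) + 1)) ^ (-s).re := by
            apply Real.rpow_le_rpow_of_nonpos (by positivity) h0
            simp; linarith
        _ = c ^ (-s).re * ((n : ℝ) + 1) ^ (-s).re := Real.mul_rpow hc.le (by positivity)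
        _ ≤ c ^ (-M) * ((n + 1 : ℕ) : ℝ) ^ (-σ) := by
            push_cast
            gcongr ?_ * ?_
            · apply Real.rpow_le_rpow_of_exponent_ge hc hc1
              simp; linarith
            · apply Real.rpow_le_rpow_of_exponent_le hn
              simp; linarith
    have e2 : Real.exp (-(arg ((n : ℂ) + w) * (-s).im)) ≤ Real.exp (Real.pi * M) := by
      apply Real.exp_le_exp.2
      calc -(arg ((n : ℂ) + w) * (-s).im) ≤ |arg ((n : ℂ) + w) * (-s).im| := neg_le_abs _
        _ = |arg ((n : ℂ) + w)| * |(-s).im| := abs_mul _ _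
        _ ≤ Real.pi * M := by
          gcongr
          · exact Complex.abs_arg_le_pi _
          · exact (abs_im_le_norm _).trans (by rw [norm_neg]; exact hs2.le)
    calc _ ≤ (c ^ (-M) * ((n + 1 : ℕ) : ℝ) ^ (-σ)) * Real.exp (Real.pi * M) := by gcongr
      _ = _ := by ring

lemma S_contAt {s₀ w₀ : ℂ} (hs : 1 < s₀.re) (hw : w₀ ∈ slitPlane) :
    ContinuousAt (fun p : ℂ × ℂ => S p.1 p.2) (s₀, w₀) := by
  obtain ⟨A, B, u, hA, hB, hsA, hwB, hBs, hu, hle⟩ := local_bound hs hw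
  have : ContinuousOn (fun p : ℂ × ℂ => S p.1 p.2) (A ×ˢ B) := by
    refine continuousOn_tsum (f := fun (n : ℕ) (p : ℂ × ℂ) => ((n : ℂ) + p.2) ^ (-p.1)) ?_ hu
      (fun n p hp => hle n p.1 hp.1 p.2 hp.2)
    intro n p hp
    apply ContinuousAt.continuousWithinAt
    exact ContinuousAt.cpow (by fun_prop) (by fun_prop) (add_nat_mem (hBs hp.2) n)
  exact this.continuousAt ((hA.prod hB).mem_nhds ⟨hsA, hwB⟩)

lemma S_diff_s {s₀ w₀ : ℂ} (hs : 1 < s₀.re) (hw : w₀ ∈ slitPlane) :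
    DifferentiableAt ℂ (fun s => S s w₀) s₀ := by
  obtain ⟨A, B, u, hA, hB, hsA, hwB, hBs, hu, hle⟩ := local_bound hs hw
  have : DifferentiableOn ℂ (fun s => S s w₀) A := by
    refine differentiableOn_tsum_of_summable_norm hu ?_ hA (fun n s hsA => hle n s hsA w₀ hwB)
    intro n s hs
    apply DifferentiableAt.differentiableWithinAt
    exact DifferentiableAt.const_cpow (by fun_prop)
      (Or.inl (slitPlane_ne_zero (add_nat_mem (hBs hwB) n)))
  exact this.differentiableAt (hA.mem_nhds hsA)

lemma S_deriv_w {s₀ w₀ : ℂ} (hs : 1 < s₀.re) (hw : w₀ ∈ slitPlane) :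
    HasDerivAt (fun w => S s₀ w) (-s₀ * S (s₀ + 1) w₀) w₀ := by
  obtain ⟨A, B, u, hA, hB, hsA, hwB, hBs, hu, hle⟩ := local_bound hs hw
  have hder : ∀ (n : ℕ), ∀ w ∈ B, HasDerivAt (fun w => ((n : ℂ) + w) ^ (-s₀))
      (-s₀ * ((n : ℂ) + w) ^ (-(s₀ + 1))) w := by
    intro n w hw
    have := ((hasDerivAt_id w).const_add (n : ℂ)).cpow_const (c := -s₀) (add_nat_mem (hBs hw) n)
    refine this.congr_deriv ?_
    rw [show -s₀ - 1 = -(s₀ + 1) by ring, mul_one]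
    rfl
  have hdo : ∀ n : ℕ, DifferentiableOn ℂ (fun w => ((n : ℂ) + w) ^ (-s₀)) B :=
    fun n w hw => (hder n w hw).differentiableAt.differentiableWithinAt
  have h1 : DifferentiableOn ℂ (fun w => S s₀ w) B :=
    differentiableOn_tsum_of_summable_norm hu hdo hB (fun n w hw => hle n s₀ hsA w hw)
  have h2 := hasSum_deriv_of_summable_norm hu hdo hB (fun n w hw => hle n s₀ hsA w hw) hwB
  have h3 := (h1.differentiableAt (hB.mem_nhds hwB)).hasDerivAt
  refine h3.congr_deriv ?_
  have h4 := h2.tsum_eq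
  simp only [fun n => (hder n w₀ hwB).deriv, tsum_mul_left] at h4
  exact h4.symm

lemma S_one {s : ℂ} (hs : 1 < s.re) : S s 1 = riemannZeta s := by
  rw [zeta_eq_tsum_one_div_nat_add_one_cpow hs, S]
  simp [cpow_neg]

lemma S_integral {s w : ℂ} (hs : 1 < s.re) (hw : w ∈ slitPlane) :
    S s w = riemannZeta s - s * (w - 1) * ∫ t in (0 : ℝ)..1, S (s + 1) (1 + (t : ℂ) * (w - 1)) := by
  have hs1 : 1 < (s + 1).re := by simp; linarith
  have h1 : ∀ t ∈ uIcc (0 : ℝ) 1, HasDerivAt (fun t : ℝ => S s (1 + (t : ℂ) * (w - 1)))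
      (-s * (w - 1) * S (s + 1) (1 + (t : ℂ) * (w - 1))) t := by
    intro t ht
    rw [uIcc_of_le zero_le_one] at ht
    have hl : HasDerivAt (fun z : ℂ => 1 + z * (w - 1)) (w - 1) (t : ℂ) := by
      simpa using ((hasDerivAt_id (t : ℂ)).mul_const (w - 1)).const_add 1
    have := (HasDerivAt.comp (t : ℂ) (S_deriv_w hs (seg_mem hw ht)) hl).comp_ofReal
    refine HasDerivAt.congr_deriv this ?_
    ring
  have hc : ContinuousOn (fun t : ℝ => S (s + 1) (1 + (t : ℂ) * (w - 1))) (uIcc (0 : ℝ) 1) := by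
    intro t ht
    rw [uIcc_of_le zero_le_one] at ht
    have := ContinuousAt.comp (f := fun t : ℝ => (s + 1, 1 + (t : ℂ) * (w - 1))) (x := t)
      (S_contAt hs1 (seg_mem hw ht)) (by fun_prop)
    exact this.continuousWithinAt
  have h2 := intervalIntegral.integral_eq_sub_of_hasDerivAt h1
    ((continuousOn_const.mul hc).intervalIntegrable)
  rw [intervalIntegral.integral_const_mul] at h2
  simp only [ofReal_one, ofReal_zero, one_mul, zero_mul, add_zero, S_one hs] at h2
  rw [show 1 + (w - 1) = w by ring] at h2
  linear_combination -h2

/-- The entire function `(s - 1) ζ(s)`. -/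
noncomputable def Z : ℂ → ℂ := Function.update (fun s => (s - 1) * riemannZeta s) 1 1

lemma Z_one : Z 1 = 1 := by simp [Z]

lemma Z_ne {s : ℂ} (hs : s ≠ 1) : Z s = (s - 1) * riemannZeta s := by simp [Z, hs]

lemma Z_diff : Differentiable ℂ Z := by
  have h : ∀ s : ℂ, s ≠ 1 → DifferentiableAt ℂ Z s := by
    intro s hs
    have h1 : DifferentiableAt ℂ (fun s => (s - 1) * riemannZeta s) s :=
      (by fun_prop : DifferentiableAt ℂ (fun s : ℂ => s - 1) s).mul (differentiableAt_riemannZeta hs)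
    refine h1.congr_of_eventuallyEq ?_
    filter_upwards [isOpen_ne.mem_nhds hs] with z hz using Z_ne hz
  intro s
  by_cases hs : s = 1
  · subst hs
    refine (Complex.analyticAt_of_differentiable_on_punctured_nhds_of_continuousAt ?_ ?_).differentiableAt
    · filter_upwards [self_mem_nhdsWithin] with z hz using h z hz
    · exact continuousAt_update_same.2 riemannZeta_residue_one
  · exact h s hs

/-- Successive continuations of `(s - 1) ζ(s, w)` to `Re s > 1 - k`. -/
noncomputable def H : ℕ → ℂ → ℂ → ℂ
  | 0 => fun s w => (s - 1) * S s w
  | k + 1 => fun s w =>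
      Z s - (s - 1) * (w - 1) * ∫ t in (0 : ℝ)..1, H k (s + 1) (1 + (t : ℂ) * (w - 1))

lemma H_good (k : ℕ) :
    ContinuousOn (fun p : ℂ × ℂ => H k p.1 p.2) ({s | 1 - (k : ℝ) < s.re} ×ˢ slitPlane) ∧
    (∀ w ∈ slitPlane, DifferentiableOn ℂ (fun s => H k s w) {s | 1 - (k : ℝ) < s.re}) ∧
    (∀ s : ℂ, 1 - (k : ℝ) < s.re → DifferentiableOn ℂ (fun w => H k s w) slitPlane) := by
  induction k with
  | zero =>
    simp only [Nat.cast_zero, sub_zero, H]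
    refine ⟨?_, ?_, ?_⟩
    · rintro ⟨s, w⟩ ⟨hs, hw⟩
      exact (ContinuousAt.mul (by fun_prop) (S_contAt hs hw)).continuousWithinAt
    · intro w hw s hs
      exact (DifferentiableAt.mul (by fun_prop) (S_diff_s hs hw)).differentiableWithinAt
    · intro s hs w hw
      exact ((S_deriv_w hs hw).differentiableAt.const_mul _).differentiableWithinAt
  | succ k ih =>
    obtain ⟨ih1, ih2, ih3⟩ := ih
    have hsh : ∀ s : ℂ, 1 - ((k + 1 : ℕ) : ℝ) < s.re → 1 - (k : ℝ) < (s + 1).re := by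
      intro s hs
      push_cast at hs
      simp; linarith
    have hopen : IsOpen {s : ℂ | 1 - ((k + 1 : ℕ) : ℝ) < s.re} :=
      isOpen_lt continuous_const continuous_re
    simp only [H]
    refine ⟨?_, ?_, ?_⟩
    · have : ContinuousOn (fun p : ℂ × ℂ => ∫ t in (0 : ℝ)..1, H k (p.1 + 1) (1 + (t : ℂ) * (p.2 - 1)))
          ({s | 1 - ((k + 1 : ℕ) : ℝ) < s.re} ×ˢ slitPlane) := by
        apply continuousOn_param
        exact ih1.comp (f := fun q : (ℂ × ℂ) × ℝ => (q.1.1 + 1, 1 + (q.2 : ℂ) * (q.1.2 - 1)))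
          (by fun_prop) (fun q hq => ⟨hsh _ hq.1.1, seg_mem hq.1.2 hq.2⟩)
      refine ContinuousOn.sub ?_ (ContinuousOn.mul (by fun_prop) this)
      exact (Z_diff.continuous.comp continuous_fst).continuousOn
    · intro w hw
      have : DifferentiableOn ℂ (fun s => ∫ t in (0 : ℝ)..1, H k (s + 1) (1 + (t : ℂ) * (w - 1)))
          {s | 1 - ((k + 1 : ℕ) : ℝ) < s.re} := by
        apply differentiableOn_param hopen
        · exact ih1.comp (f := fun q : ℂ × ℝ => (q.1 + 1, 1 + (q.2 : ℂ) * (w - 1)))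
            (by fun_prop) (fun q hq => ⟨hsh _ hq.1, seg_mem hw hq.2⟩)
        · intro t ht
          exact (ih2 _ (seg_mem hw ht)).comp (f := fun s => s + 1) (by fun_prop) (fun s hs => hsh s hs)
      exact Z_diff.differentiableOn.sub (DifferentiableOn.mul (by fun_prop) this)
    · intro s hs
      have : DifferentiableOn ℂ (fun w => ∫ t in (0 : ℝ)..1, H k (s + 1) (1 + (t : ℂ) * (w - 1)))
          slitPlane := by
        apply differentiableOn_param isOpen_slitPlane
        · exact ih1.comp (f := fun q : ℂ × ℝ => (s + 1, 1 + (q.2 : ℂ) * (q.1 - 1)))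
            (by fun_prop) (fun q hq => ⟨hsh _ hs, seg_mem hq.1 hq.2⟩)
        · intro t ht
          exact (ih3 _ (hsh s hs)).comp (f := fun w => 1 + (t : ℂ) * (w - 1)) (by fun_prop)
            (fun w hw => seg_mem hw ht)
      exact (differentiableOn_const _).sub (DifferentiableOn.mul (by fun_prop) this)

lemma H_succ (k : ℕ) : ∀ s w : ℂ, 1 - (k : ℝ) < s.re → w ∈ slitPlane → H (k + 1) s w = H k s w := by
  induction k with
  | zero =>
    intro s w hs hw
    simp only [Nat.cast_zero, sub_zero] at hs
    have hs1 : s ≠ 1 := by rintro rfl; simp at hs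
    simp only [H, add_sub_cancel_right, intervalIntegral.integral_const_mul]
    rw [S_integral hs hw, Z_ne hs1]
    ring
  | succ k ih =>
    intro s w hs hw
    rw [H.eq_2 (k + 1), H.eq_2 k]
    simp only
    congr 2
    apply intervalIntegral.integral_congr
    intro t ht
    rw [uIcc_of_le zero_le_one] at ht
    apply ih _ _ _ (seg_mem hw ht)
    push_cast at hs
    simp; linarith

lemma H_le {j k : ℕ} (hjk : j ≤ k) {s w : ℂ} (hs : 1 - (j : ℝ) < s.re) (hw : w ∈ slitPlane) :
    H k s w = H j s w := by
  induction k, hjk using Nat.le_induction with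
  | base => rfl
  | succ k hk ih =>
    rw [H_succ k s w _ hw, ih]
    have : (j : ℝ) ≤ k := by exact_mod_cast hk
    linarith

/-- The index used at the point `s`. -/
noncomputable def idx (s : ℂ) : ℕ := ⌊1 - s.re⌋₊ + 1

lemma idx_spec (s : ℂ) : 1 - (idx s : ℝ) < s.re := by
  have := Nat.lt_floor_add_one (1 - s.re)
  simp only [idx]; push_cast; linarith

/-- The continuation of `(s - 1) ζ(s, w)` to all `s`. -/
noncomputable def E (s w : ℂ) : ℂ := H (idx s) s w

lemma E_eq {k : ℕ} {s w : ℂ} (hs : 1 - (k : ℝ) < s.re) (hw : w ∈ slitPlane) : E s w = H k s w := by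
  rw [E]
  rcases le_total k (idx s) with h | h
  · exact H_le h hs hw
  · exact (H_le h (idx_spec s) hw).symm

lemma E_diff_s {w : ℂ} (hw : w ∈ slitPlane) : Differentiable ℂ (fun s => E s w) := by
  intro s
  have hopen : IsOpen {z : ℂ | 1 - (idx s : ℝ) < z.re} := isOpen_lt continuous_const continuous_re
  have hmem := hopen.mem_nhds (idx_spec s)
  refine (((H_good (idx s)).2.1 w hw).differentiableAt hmem).congr_of_eventuallyEq ?_
  filter_upwards [hmem] with z hz using E_eq hz hw

lemma E_diff_w (s : ℂ) {w : ℂ} (hw : w ∈ slitPlane) : DifferentiableAt ℂ (fun w => E s w) w :=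
  ((H_good (idx s)).2.2 s (idx_spec s)).differentiableAt (isOpen_slitPlane.mem_nhds hw)

lemma E_one {w : ℂ} (hw : w ∈ slitPlane) : E 1 w = 1 := by
  rw [E_eq (k := 1) (by simp) hw]
  simp [H, Z_one]

end HZ

theorem hurwitz_zeta_analytic_continuation :
    ∃ G : ℂ → ℂ → ℂ,
      (∀ s : ℂ, s ≠ 1 → ∀ w ∉ negRay,
        DifferentiableAt ℂ (fun s' => G s' w) s ∧
        DifferentiableAt ℂ (fun w' => G s w') w) ∧
      (∀ s w : ℂ, 1 < s.re → w ∉ negRay →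
        G s w = ∑' n : ℕ, ((n : ℂ) + w) ^ (-s)) ∧
      (∀ w ∉ negRay,
        Tendsto (fun s : ℂ => (s - 1) * G s w) (nhdsWithin 1 {(1 : ℂ)}ᶜ) (nhds 1)) := by
  refine ⟨fun s w => HZ.E s w / (s - 1), ?_, ?_, ?_⟩
  · intro s hs w hw
    have hw := HZ.mem_slit_of hw
    exact ⟨(HZ.E_diff_s hw s).div (by fun_prop) (sub_ne_zero.2 hs), (HZ.E_diff_w s hw).div_const _⟩
  · intro s w hs hw
    have hw := HZ.mem_slit_of hw
    have hs1 : s - 1 ≠ 0 := by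
      intro h
      rw [sub_eq_zero.1 h] at hs
      simp at hs
    simp only
    rw [HZ.E_eq (k := 0) (by simpa using hs) hw]
    simp only [HZ.H]
    rw [mul_div_cancel_left₀ _ hs1, HZ.S]
  · intro w hw
    have hw := HZ.mem_slit_of hw
    have h1 : Tendsto (fun s => HZ.E s w) (nhdsWithin 1 {(1 : ℂ)}ᶜ) (nhds 1) := by
      have := (HZ.E_diff_s hw 1).continuousAt.tendsto
      rw [HZ.E_one hw] at this
      exact this.mono_left nhdsWithin_le_nhds
    refine h1.congr' ?_
    filter_upwards [self_mem_nhdsWithin] with s hs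
    rw [mul_div_cancel₀ _ (sub_ne_zero.2 hs)]
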